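/- Let Σ be a finite ordered alphabet and let w : ℕ → Σ be an aperiodic infinite word with orbit closure L_w. Suppose there is exactly one shift-invariant Borel probability measure μ on L_w, and suppose μ assigns positive measure to the cylinder of every factor of w. For z ∈ L_w, define ν(z) = μ{y ∈ L_w : y ≤ z}, where ≤ is the lexicographic order. Then the sequence (ν(σ^n(w)))_{n≥0} is equidistributed on [0,1], and moreover ν(σ^n(w)) ≠ ν(σ^m(w)) whenever n ≠ m. -/

import Mathlib

/-!
Write `L` for the orbit closure of `w` and `F z = μ {y | y ≤ z}` for the lexicographic
distribution function of `μ` (`lexCdf`); as `μ L = 1`, it coincides with `ν`.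

*No atoms* (`measure_singleton_eq_zero`). An atom of `μ` would be eventually periodic, because
masses of points do not decrease along orbits. The uniform measure on its cycle is invariant and
carried by `L`, hence equals `μ` by uniqueness. All prefixes of `w` then occur in that cycle, so `w`
is periodic, a contradiction.

*Equidistribution*. The empirical measures of the orbit of `w` lie in the compact space of
probability measures, and each of their cluster points is invariant and carried by `L`; hence
they converge weakly to `μ` (`tendsto_empirical`). As `μ` has no atoms, `F` is continuous, and
compactness of the space of words gives `μ {F ≤ t} ≤ t` and `μ {F ≥ t} ≤ 1 - t`, so `F` pushes
`μ` to the uniform measure on `[0, 1]` (`measureReal_lexCdf_Icc`). The set `{c ≤ F ≤ d}` therefore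
has a null frontier and measure `d - c`, and the portmanteau theorem applies.

*Injectivity* (`lexCdf_ne_of_lexLt`). Let `x < y` be two shifts of `w` with `F x = F y`, so that
the interval `(x, y]` is null. If `y` is `x` shifted by `p`, consider a word `z` sharing a long prefix
with `x`. When `z > x`, it lies in `(x, y]`; when `z < x`, its shift by `p` is less than `y` and shares
a prefix with `y`, so it lies in `(x, y]`. A cylinder around `x` is thus null, contrary to the
hypothesis on factors. The case where `x` is a shift of `y` is symmetric.
-/

/-- The factor `w[i..i+l-1]` of an infinite word, as a list. -/
def seg {α : Type*} (w : ℕ → α) (i l : ℕ) : List α :=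
  (List.range l).map fun k => w (i + k)

/-- The finite word `u` occurs in `w` at position `i`. -/
def occursAt {α : Type*} (u : List α) (w : ℕ → α) (i : ℕ) : Prop :=
  u = seg w i u.length

/-- `u` is a factor of the infinite word `w`. -/
def IsFactor {α : Type*} (u : List α) (w : ℕ → α) : Prop :=
  ∃ i, occursAt u w i

/-- The shift, erasing the first letter. -/
def shift {α : Type*} (w : ℕ → α) : ℕ → α := fun n => w (n + 1)

/-- Strict lexicographic order on infinite words. -/
def lexLt {α : Type*} [LinearOrder α] (u v : ℕ → α) : Prop :=
  ∃ n, (∀ k < n, u k = v k) ∧ u n < v n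

/-- Non-strict lexicographic order on infinite words. -/
def lexLe {α : Type*} [LinearOrder α] (u v : ℕ → α) : Prop :=
  lexLt u v ∨ u = v

/-- A morphism `φ : α → List α` applied to a finite word. -/
def substList {α : Type*} (φ : α → List α) (u : List α) : List α :=
  u.flatMap φ

/-- A (non-erasing) morphism applied to an infinite word:
letter number `n` of `φ(w[0])φ(w[1])⋯`. -/
def substInf {α : Type*} (φ : α → List α) (w : ℕ → α) : ℕ → α :=
  fun n => (substList φ (seg w 0 (n + 1))).getD n (w 0)

/-- A morphism is non-erasing if images of all letters are nonempty. -/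
def NonErasing {α : Type*} (φ : α → List α) : Prop := ∀ c, φ c ≠ []

/-- `w` is ultimately periodic, i.e. of the form `u·v·v·v·⋯` with `v` nonempty. -/
def UltimatelyPeriodic {α : Type*} (w : ℕ → α) : Prop :=
  ∃ p, 0 < p ∧ ∃ N, ∀ n, N ≤ n → w (n + p) = w n

/-- Membership in the orbit closure `L_w` of `w` (the closure of `{σⁿ(w)}` in the
product topology): every prefix of `z` occurs in `w`. -/
def InOrbitClosure {α : Type*} (z w : ℕ → α) : Prop :=
  ∀ n, ∃ m, seg z 0 n = seg w m n

/-- Every factor of `w` occurs infinitely often in `w`. -/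
def Recurrent {α : Type*} (w : ℕ → α) : Prop :=
  ∀ u : List α, IsFactor u w → ∀ N, ∃ i, N ≤ i ∧ occursAt u w i

/-- Every factor of `w` occurs in `w` with bounded gaps: there is `C` such that every
window of length `C` contains an occurrence. -/
def UniformlyRecurrent {α : Type*} (w : ℕ → α) : Prop :=
  ∀ u : List α, IsFactor u w →
    ∃ C, ∀ i, ∃ j, i ≤ j ∧ j + u.length ≤ i + C ∧ occursAt u w j

/-- A non-erasing morphism is order-preserving if for all infinite words `u, v`:
`u < v` iff `φ(u) < φ(v)`. -/
def OrderPreserving {α : Type*} [LinearOrder α] (φ : α → List α) : Prop :=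
  ∀ u v : ℕ → α, lexLt u v ↔ lexLt (substInf φ u) (substInf φ v)

/-- `z₀` is the lexicographically greatest element of `S`. -/
def IsLexGreatest {α : Type*} [LinearOrder α] (S : Set (ℕ → α)) (z₀ : ℕ → α) : Prop :=
  z₀ ∈ S ∧ ∀ z ∈ S, z = z₀ ∨ lexLt z z₀

/-- `z₀` is the lexicographically least element of `S`. -/
def IsLexLeast {α : Type*} [LinearOrder α] (S : Set (ℕ → α)) (z₀ : ℕ → α) : Prop :=
  z₀ ∈ S ∧ ∀ z ∈ S, z = z₀ ∨ lexLt z₀ z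

/-- A sequence of reals is equidistributed on `[0,1]`. -/
def Equidistributed (x : ℕ → ℝ) : Prop :=
  ∀ c d : ℝ, 0 ≤ c → c ≤ d → d ≤ 1 →
    Filter.Tendsto
      (fun N : ℕ => (((Finset.range N).filter fun n => c ≤ x n ∧ x n ≤ d).card : ℝ) / N)
      Filter.atTop (nhds (d - c))

/-- Prepend a finite word to an infinite word. -/
def prependWord {α : Type*} (u : List α) (w : ℕ → α) : ℕ → α :=
  fun n => if h : n < u.length then u.get ⟨n, h⟩ else w (n - u.length)

open MeasureTheory

open Filter Topology
open scoped ENNReal BoundedContinuousFunction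

/-! ### Empirical measures and unique ergodicity -/

section Empirical

variable {X : Type*} [MeasurableSpace X]

/-- The empirical measure of the first `N + 1` points of the `T`-orbit of `x`; the shift of the
index by one makes it a probability measure for every `N`. -/
noncomputable def empirical (T : X → X) (x : X) (N : ℕ) : Measure X :=
  ((N + 1 : ℕ) : ℝ≥0∞)⁻¹ • ∑ n ∈ Finset.range (N + 1), Measure.dirac (T^[n] x)

lemma empirical_apply (T : X → X) (x : X) (N : ℕ) {s : Set X} (hs : MeasurableSet s) :
    empirical T x N s =
      ((N + 1 : ℕ) : ℝ≥0∞)⁻¹ * ∑ n ∈ Finset.range (N + 1), s.indicator 1 (T^[n] x) := by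
  simp [empirical, Measure.dirac_apply' _ hs]

lemma empirical_eq_one (T : X → X) (x : X) (N : ℕ) {s : Set X} (hs : MeasurableSet s)
    (h : ∀ n, T^[n] x ∈ s) : empirical T x N s = 1 := by
  rw [empirical_apply T x N hs, Finset.sum_congr rfl (g := fun _ => 1)]
  · simp only [Finset.sum_const, Finset.card_range, nsmul_eq_mul, mul_one]
    exact ENNReal.inv_mul_cancel (by simp) (by finiteness)
  · intro n _
    simp [h n]

instance (T : X → X) (x : X) (N : ℕ) : IsProbabilityMeasure (empirical T x N) :=
  ⟨empirical_eq_one T x N MeasurableSet.univ fun _ => trivial⟩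

/-- The empirical measures as points of the space of probability measures. -/
noncomputable def empiricalProb (T : X → X) (x : X) (N : ℕ) : ProbabilityMeasure X :=
  ⟨empirical T x N, inferInstance⟩

lemma empirical_real_apply (T : X → X) (x : X) (N : ℕ) {s : Set X} (hs : MeasurableSet s)
    [DecidablePred (· ∈ s)] :
    (empirical T x N s).toReal =
      (((Finset.range (N + 1)).filter fun n => T^[n] x ∈ s).card : ℝ) / (N + 1 : ℕ) := by
  rw [empirical_apply T x N hs, Finset.card_filter]
  have : ∀ n, s.indicator (1 : X → ℝ≥0∞) (T^[n] x) =
      (((if T^[n] x ∈ s then 1 else 0 : ℕ)) : ℝ≥0∞) := by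
    intro n; simp [Set.indicator_apply]
  simp_rw [this]
  rw [← Nat.cast_sum, ENNReal.toReal_mul, ENNReal.toReal_inv, ENNReal.toReal_natCast,
    ENNReal.toReal_natCast, div_eq_inv_mul]

/-- The empirical measure of a full period of a periodic point is invariant. -/
lemma empirical_preimage_of_periodic (T : X → X) (hT : Measurable T) (x : X) (N : ℕ)
    (hx : T^[N + 1] x = x) {s : Set X} (hs : MeasurableSet s) :
    empirical T x N (T ⁻¹' s) = empirical T x N s := by
  rw [empirical_apply T x N hs, empirical_apply T x N (hT hs)]
  congr 1
  have h : ∀ n, (T ⁻¹' s).indicator (1 : X → ℝ≥0∞) (T^[n] x) = s.indicator 1 (T^[n + 1] x) := by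
    intro n
    rw [Function.iterate_succ_apply']
    rfl
  simp_rw [h]
  rw [Finset.sum_range_succ, Finset.sum_range_succ', hx]
  rfl

variable [TopologicalSpace X] [BorelSpace X]

lemma integral_empirical (T : X → X) (x : X) (N : ℕ) (f : X →ᵇ ℝ) :
    ∫ y, f y ∂empirical T x N = ((N + 1 : ℕ) : ℝ)⁻¹ * ∑ n ∈ Finset.range (N + 1), f (T^[n] x) := by
  rw [empirical, integral_smul_measure, integral_finsetSum_measure]
  · rw [ENNReal.toReal_inv, ENNReal.toReal_natCast, smul_eq_mul]
    simp_rw [integral_dirac' _ _ f.continuous.measurable.stronglyMeasurable]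
  · intro n _
    exact f.integrable _

/-- **Unique ergodicity**: if `μ` is the only `T`-invariant probability measure on the closed
set `L`, then the empirical measures along any orbit inside `L` converge weakly to `μ`, because
by compactness they have cluster points, all of which are invariant and carried by `L`. -/
lemma tendsto_empirical [CompactSpace X] [T2Space X] [HasOuterApproxClosed X]
    (T : X → X) (hT : Continuous T) (x : X) (L : Set X) (hL : IsClosed L)
    (hx : ∀ n, T^[n] x ∈ L) (μ : ProbabilityMeasure X)
    (huniq : ∀ μ' : Measure X, IsProbabilityMeasure μ' → μ' L = 1 →
      (∀ s : Set X, MeasurableSet s → μ' (T ⁻¹' s) = μ' s) → μ' = μ) :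
    Tendsto (empiricalProb T x) atTop (𝓝 μ) := by
  apply tendsto_nhds_of_unique_mapClusterPt
  intro ρ hρ
  obtain ⟨U, hU, hUρ⟩ := mapClusterPt_iff_ultrafilter.1 hρ
  apply Subtype.ext
  apply huniq ρ inferInstance
  · have h := ProbabilityMeasure.limsup_measure_closed_le_of_tendsto hUρ hL
    have h1 : ∀ N, empirical T x N L = 1 := fun N => empirical_eq_one T x N hL.measurableSet hx
    simp only [empiricalProb, ProbabilityMeasure.coe_mk, h1, limsup_const] at h
    exact le_antisymm prob_le_one h
  · have hmap : (ρ : Measure X).map T = ρ := by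
      have : IsProbabilityMeasure ((ρ : Measure X).map T) :=
        Measure.isProbabilityMeasure_map hT.aemeasurable
      apply ext_of_forall_integral_eq_of_IsFiniteMeasure
      intro f
      rw [integral_map hT.aemeasurable f.continuous.aestronglyMeasurable]
      rw [ProbabilityMeasure.tendsto_iff_forall_integral_tendsto] at hUρ
      have h1 := hUρ f
      have h2 := hUρ (f.compContinuous ⟨T, hT⟩)
      simp only [empiricalProb, ProbabilityMeasure.coe_mk, integral_empirical] at h1 h2
      have h3 := h2.sub h1
      have h4 : Tendsto (fun N : ℕ => ((N + 1 : ℕ) : ℝ)⁻¹ * (2 * ‖f‖)) U (𝓝 0) := by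
        have := (tendsto_inv_atTop_nhds_zero_nat (𝕜 := ℝ)).comp (tendsto_add_atTop_nat 1)
        simpa using (this.mono_left hU).mul_const (2 * ‖f‖)
      have h5 := squeeze_zero_norm (fun N => ?_) h4 |> tendsto_nhds_unique h3
      · exact sub_eq_zero.1 h5
      · have : ∀ n, (f.compContinuous ⟨T, hT⟩) (T^[n] x) = f (T^[n + 1] x) := by
          intro n
          rw [Function.iterate_succ_apply']
          rfl
        simp_rw [this]
        rw [← mul_sub, ← Finset.sum_sub_distrib, Finset.sum_range_sub (fun n => f (T^[n] x)),
          norm_mul, norm_inv, Real.norm_natCast]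
        gcongr
        exact f.dist_le_two_norm _ _
    intro s hs
    rw [← Measure.map_apply hT.measurable hs, hmap]

end Empirical

/-! ### Words, shifts and the lexicographic order -/

section Words

lemma shift_iterate_apply {A : Type*} (n : ℕ) (z : ℕ → A) (k : ℕ) : shift^[n] z k = z (n + k) := by
  induction n generalizing z with
  | zero => simp
  | succ n ih =>
    rw [Function.iterate_succ_apply, ih, shift]
    congr 1
    omega

lemma seg_eq_seg_iff {A : Type*} (z w : ℕ → A) (i j n : ℕ) :
    seg z i n = seg w j n ↔ ∀ k < n, z (i + k) = w (j + k) := by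
  simp [seg]

lemma inOrbitClosure_iff {A : Type*} (z w : ℕ → A) :
    InOrbitClosure z w ↔ ∀ n, ∃ m, ∀ k < n, z k = w (m + k) := by
  simp [InOrbitClosure, seg_eq_seg_iff]

lemma InOrbitClosure.shift_iterate {A : Type*} {z w : ℕ → A} (h : InOrbitClosure z w) (p : ℕ) :
    InOrbitClosure (shift^[p] z) w := by
  rw [inOrbitClosure_iff] at h ⊢
  intro n
  obtain ⟨m, hm⟩ := h (p + n)
  refine ⟨m + p, fun k hk => ?_⟩
  rw [shift_iterate_apply, hm _ (by omega), add_assoc]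

lemma inOrbitClosure_self {A : Type*} (w : ℕ → A) : InOrbitClosure w w :=
  fun _ => ⟨0, rfl⟩

lemma shift_iterate_injective {A : Type*} {w : ℕ → A} (hap : ¬ UltimatelyPeriodic w) :
    Function.Injective fun n => shift^[n] w := by
  refine Function.Injective.of_lt_imp_ne fun n m hnm h => hap ⟨m - n, by omega, n, fun k hk => ?_⟩
  have := congrFun h (k - n)
  simp only [shift_iterate_apply] at this
  rw [show n + (k - n) = k by omega, show m + (k - n) = k + (m - n) by omega] at this
  exact this.symm

/-- The cylinder of the prefix of length `n` of `z`, in the full space `A^ℕ`. -/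
def prefixCyl {A : Type*} (z : ℕ → A) (n : ℕ) : Set (ℕ → A) := {y | ∀ k < n, y k = z k}

variable {A : Type*} [LinearOrder A]

lemma lexLt.trans {x y z : ℕ → A} (h : lexLt x y) (h' : lexLt y z) : lexLt x z := by
  obtain ⟨n, hn, hn'⟩ := h
  obtain ⟨m, hm, hm'⟩ := h'
  rcases lt_trichotomy n m with hnm | rfl | hnm
  · exact ⟨n, fun k hk => (hn k hk).trans (hm k (hk.trans hnm)), hm n hnm ▸ hn'⟩
  · exact ⟨n, fun k hk => (hn k hk).trans (hm k hk), hn'.trans hm'⟩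
  · exact ⟨m, fun k hk => (hn k (hk.trans hnm)).trans (hm k hk), hn m hnm ▸ hm'⟩

lemma lexLt_irrefl (x : ℕ → A) : ¬ lexLt x x := fun ⟨_, _, h⟩ => lt_irrefl _ h

lemma lexLt_trichotomy (x y : ℕ → A) : lexLt x y ∨ x = y ∨ lexLt y x := by
  by_cases h : x = y
  · exact Or.inr (Or.inl h)
  · classical
    have h' : ∃ n, x n ≠ y n := Function.ne_iff.1 h
    have h1 : ∀ k < Nat.find h', x k = y k := fun k hk => not_not.1 (Nat.find_min h' hk)
    rcases lt_or_gt_of_ne (Nat.find_spec h') with h2 | h2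
    · exact Or.inl ⟨_, h1, h2⟩
    · exact Or.inr (Or.inr ⟨_, fun k hk => (h1 k hk).symm, h2⟩)

lemma not_lexLe {x y : ℕ → A} : ¬ lexLe x y ↔ lexLt y x := by
  constructor
  · intro h
    rcases lexLt_trichotomy x y with h' | h' | h'
    · exact absurd (Or.inl h') h
    · exact absurd (Or.inr h') h
    · exact h'
  · rintro h (h' | rfl)
    · exact lexLt_irrefl _ (h.trans h')
    · exact lexLt_irrefl _ h

lemma lexLe_refl (x : ℕ → A) : lexLe x x := Or.inr rfl

lemma lexLe.trans {x y z : ℕ → A} (h : lexLe x y) (h' : lexLe y z) : lexLe x z := by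
  rcases h with h | rfl
  · rcases h' with h' | rfl
    · exact Or.inl (h.trans h')
    · exact Or.inl h
  · exact h'

lemma lexLe_total (x y : ℕ → A) : lexLe x y ∨ lexLe y x := by
  rcases lexLt_trichotomy x y with h | h | h
  · exact Or.inl (Or.inl h)
  · exact Or.inl (Or.inr h)
  · exact Or.inr (Or.inl h)

/-- Comparison with words outside a cylinder does not distinguish words inside it. -/
lemma lexLt_of_prefixCyl {x y z : ℕ → A} {n : ℕ} (hy : y ∈ prefixCyl z n)
    (hx : x ∉ prefixCyl z n) (h : lexLt x y) : lexLt x z := by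
  obtain ⟨m, hm, hm'⟩ := h
  have hmn : m < n := by
    by_contra hmn
    exact hx fun k hk => (hm k (by omega)).trans (hy k hk)
  exact ⟨m, fun k hk => (hm k hk).trans (hy k (hk.trans hmn)), hy m hmn ▸ hm'⟩

/-- If `x < y` differ before position `l`, then `x` is below the whole cylinder of length `l`
of `y`. -/
lemma lexLt_of_mem_prefixCyl_right {x y z : ℕ → A} {n l : ℕ} (h : ∀ k < n, x k = y k)
    (h' : x n < y n) (hnl : n < l) (hz : z ∈ prefixCyl y l) : lexLt x z :=
  ⟨n, fun k hk => (h k hk).trans (hz k (hk.trans hnl)).symm, (hz n hnl).symm ▸ h'⟩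

lemma lexLt_of_mem_prefixCyl_left {x y z : ℕ → A} {n l : ℕ} (h : ∀ k < n, x k = y k)
    (h' : x n < y n) (hnl : n < l) (hz : z ∈ prefixCyl x l) : lexLt z y :=
  ⟨n, fun k hk => (hz k (hk.trans hnl)).trans (h k hk), (hz n hnl).symm ▸ h'⟩

lemma lexLt.shift_iterate {x z : ℕ → A} {p : ℕ} (h : lexLt x z)
    (hp : ∀ k < p, x k = z k) : lexLt (shift^[p] x) (shift^[p] z) := by
  obtain ⟨n, hn, hn'⟩ := h
  have hpn : p ≤ n := by
    by_contra hpn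
    exact (hp n (by omega)).not_lt hn'
  refine ⟨n - p, fun k hk => ?_, ?_⟩
  · simp only [shift_iterate_apply]
    exact hn _ (by omega)
  · simp only [shift_iterate_apply]
    rwa [show p + (n - p) = n by omega]

end Words

/-! ### Topology of the space of words -/

section Top

lemma continuous_shift {A : Type*} [TopologicalSpace A] : Continuous (shift : (ℕ → A) → ℕ → A) :=
  continuous_pi fun n => continuous_apply (n + 1)

variable {A : Type*} [TopologicalSpace A] [DiscreteTopology A]

lemma isClopen_prefixCyl (z : ℕ → A) (n : ℕ) : IsClopen (prefixCyl z n) := by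
  have : prefixCyl z n = ⋂ k ∈ Finset.range n, (fun y : ℕ → A => y k) ⁻¹' {z k} := by
    ext; simp [prefixCyl]
  rw [this]
  exact isClopen_biInter_finset fun k _ => (isClopen_discrete _).preimage (continuous_apply k)

lemma isClosed_orbitClosure (w : ℕ → A) : IsClosed {z | InOrbitClosure z w} := by
  -- a word disagreeing with every shift of `w` on a prefix does so on its whole cylinder
  rw [← isOpen_compl_iff, isOpen_iff_mem_nhds]
  intro z hz
  simp only [Set.mem_compl_iff, Set.mem_ofPred_eq, inOrbitClosure_iff, not_forall] at hz
  obtain ⟨n, hn⟩ := hz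
  refine mem_of_superset ((isClopen_prefixCyl z n).isOpen.mem_nhds fun _ _ => rfl) ?_
  intro y hy hy'
  obtain ⟨m, hm⟩ := (inOrbitClosure_iff y w).1 hy' n
  exact hn ⟨m, fun k hk => (hy k hk).symm.trans (hm k hk)⟩

variable [LinearOrder A]

lemma isOpen_lexLt_left (y : ℕ → A) : IsOpen {z | lexLt z y} := by
  rw [isOpen_iff_mem_nhds]
  rintro z ⟨n, hn, hn'⟩
  refine mem_of_superset ((isClopen_prefixCyl z (n + 1)).isOpen.mem_nhds fun _ _ => rfl) ?_
  intro x hx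
  exact lexLt_of_mem_prefixCyl_left hn hn' n.lt_succ_self hx

lemma isOpen_lexLt_right (y : ℕ → A) : IsOpen {z | lexLt y z} := by
  rw [isOpen_iff_mem_nhds]
  rintro z ⟨n, hn, hn'⟩
  refine mem_of_superset ((isClopen_prefixCyl z (n + 1)).isOpen.mem_nhds fun _ _ => rfl) ?_
  intro x hx
  exact lexLt_of_mem_prefixCyl_right hn hn' n.lt_succ_self hx

lemma isClosed_lexLe_left (y : ℕ → A) : IsClosed {z | lexLe z y} := by
  have : {z | lexLe z y} = {z | lexLt y z}ᶜ := by
    ext z; simp [← not_lexLe]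
  rw [this]
  exact (isOpen_lexLt_right y).isClosed_compl

lemma isClosed_lexLe_right (y : ℕ → A) : IsClosed {z | lexLe y z} := by
  have : {z | lexLe y z} = {z | lexLt z y}ᶜ := by
    ext z; simp [← not_lexLe]
  rw [this]
  exact (isOpen_lexLt_left y).isClosed_compl

/-- A nonempty closed subset of a compact space has a greatest element for every total preorder
with closed upper sections. Stated for a relation so that it also yields least elements. -/
lemma exists_greatest_of_isClosed {X : Type*} [TopologicalSpace X] [CompactSpace X]
    (R : X → X → Prop) (htrans : ∀ x y z, R x y → R y z → R x z) (htot : ∀ x y, R x y ∨ R y x)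
    (hclosed : ∀ x, IsClosed {y | R x y}) {K : Set X} (hK : IsClosed K) (hne : K.Nonempty) :
    ∃ m ∈ K, ∀ x ∈ K, R x m := by
  have : Nonempty K := hne.to_subtype
  have hrefl : ∀ x, R x x := fun x => (htot x x).elim id id
  have hcl : ∀ x : K, IsClosed (K ∩ {y | R x y}) := fun x => hK.inter (hclosed x)
  obtain ⟨m, hm⟩ := IsCompact.nonempty_iInter_of_directed_nonempty_isCompact_isClosed
    (fun x : K => K ∩ {y | R x y})
    (fun x y => by
      rcases htot x y with h | h
      · exact ⟨y, fun z hz => ⟨hz.1, htrans _ _ _ h hz.2⟩, subset_rfl⟩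
      · exact ⟨x, subset_rfl, fun z hz => ⟨hz.1, htrans _ _ _ h hz.2⟩⟩)
    (fun x => ⟨x, x.2, hrefl x⟩) (fun x => (hcl x).isCompact) hcl
  rw [Set.mem_iInter] at hm
  exact ⟨m, (hm this.some).1, fun x hx => (hm ⟨x, hx⟩).2⟩

end Top

/-! ### The distribution function of an atomless measure -/

section Cdf

variable {A : Type*} [LinearOrder A] [MeasurableSpace A]

/-- The lexicographic distribution function of a measure on infinite words. -/
noncomputable def lexCdf (μ : Measure (ℕ → A)) (z : ℕ → A) : ℝ := μ.real {y | lexLe y z}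

variable (μ : Measure (ℕ → A)) [IsProbabilityMeasure μ]

lemma lexCdf_le_add {y z : ℕ → A} {n : ℕ} (h : y ∈ prefixCyl z n) :
    lexCdf μ y ≤ lexCdf μ z + μ.real (prefixCyl z n) := by
  refine le_trans (measureReal_mono ?_) (measureReal_union_le _ _)
  intro x hx
  by_cases hxz : x ∈ prefixCyl z n
  · exact Or.inr hxz
  · left
    rcases hx with hx | rfl
    · exact Or.inl (lexLt_of_prefixCyl h hxz hx)
    · exact absurd h hxz

variable [Fintype A] [TopologicalSpace A] [DiscreteTopology A] [BorelSpace A]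

/-- Without atoms, the distribution function varies little on long cylinders. -/
lemma continuous_lexCdf (hna : ∀ z, μ {z} = 0) : Continuous (lexCdf μ) := by
  rw [continuous_iff_continuousAt]
  intro z
  have hlim : Tendsto (fun n => μ.real (prefixCyl z n)) atTop (𝓝 0) := by
    have hanti : Antitone (prefixCyl z) := fun n m hnm y hy k hk => hy k (hk.trans_le hnm)
    have hinter : ⋂ n, prefixCyl z n = {z} := by
      ext y
      simp only [Set.mem_iInter, Set.mem_singleton_iff]
      exact ⟨fun h => funext fun k => h (k + 1) k k.lt_succ_self, fun h n k _ => h ▸ rfl⟩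
    have h := tendsto_measure_iInter_atTop (μ := μ)
      (fun n => (isClopen_prefixCyl z n).isOpen.measurableSet.nullMeasurableSet) hanti
      ⟨0, measure_ne_top _ _⟩
    rw [hinter, hna] at h
    exact (ENNReal.tendsto_toReal ENNReal.zero_ne_top).comp h
  rw [ContinuousAt, Metric.tendsto_nhds]
  intro ε hε
  obtain ⟨n, hn⟩ := (hlim.eventually_lt_const hε).exists
  filter_upwards [(isClopen_prefixCyl z n).isOpen.mem_nhds (fun _ _ => rfl)] with y hy
  have hzy : z ∈ prefixCyl y n := fun k hk => (hy k hk).symm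
  have hcyl : prefixCyl y n = prefixCyl z n := by
    ext x
    exact ⟨fun hx k hk => (hx k hk).trans (hy k hk), fun hx k hk => (hx k hk).trans (hzy k hk)⟩
  have h1 := lexCdf_le_add μ hy
  have h2 := lexCdf_le_add μ hzy
  rw [hcyl] at h2
  rw [Real.dist_eq, abs_lt]
  constructor <;> linarith

/-- The sublevel set is closed, so if nonempty it has a greatest element `m`; it is then contained
in `{y | y ≤ m}`, whose mass is the value of the distribution function at `m`. -/
lemma measureReal_lexCdf_le (hna : ∀ z, μ {z} = 0) {t : ℝ} (ht : 0 ≤ t) :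
    μ.real {z | lexCdf μ z ≤ t} ≤ t := by
  rcases Set.eq_empty_or_nonempty {z | lexCdf μ z ≤ t} with h | h
  · simpa [h] using ht
  · obtain ⟨m, hm, hm'⟩ := exists_greatest_of_isClosed lexLe (fun _ _ _ => lexLe.trans) lexLe_total
      isClosed_lexLe_right (isClosed_le (continuous_lexCdf μ hna) continuous_const) h
    exact (measureReal_mono fun y hy => hm' y hy).trans hm

lemma measureReal_le_lexCdf (hna : ∀ z, μ {z} = 0) {t : ℝ} (ht : t ≤ 1) :
    μ.real {z | t ≤ lexCdf μ z} ≤ 1 - t := by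
  rcases Set.eq_empty_or_nonempty {z | t ≤ lexCdf μ z} with h | h
  · simpa [h] using ht
  · obtain ⟨m, hm, hm'⟩ := exists_greatest_of_isClosed (fun x y : ℕ → A => lexLe y x)
      (fun _ _ _ h h' => lexLe.trans h' h) (fun x y => lexLe_total y x)
      isClosed_lexLe_left (isClosed_le continuous_const (continuous_lexCdf μ hna)) h
    calc μ.real {z | t ≤ lexCdf μ z}
        ≤ μ.real ({z | lexLe z m}ᶜ ∪ {m}) := measureReal_mono fun y hy => by
          rcases hm' y hy with h | h
          · exact Or.inl (not_lexLe.2 h)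
          · exact Or.inr h.symm
      _ ≤ μ.real {z | lexLe z m}ᶜ + μ.real {m} := measureReal_union_le _ _
      _ = 1 - lexCdf μ m := by
          rw [probReal_compl_eq_one_sub (isClosed_lexLe_left m).measurableSet]
          simp [lexCdf, Measure.real, hna]
      _ ≤ 1 - t := by
          have : t ≤ lexCdf μ m := hm
          linarith

lemma measureReal_lexCdf_lt (hna : ∀ z, μ {z} = 0) {t : ℝ} (ht : 0 ≤ t) (ht' : t ≤ 1) :
    μ.real {z | lexCdf μ z < t} = t := by
  apply le_antisymm
  · refine (measureReal_mono ?_).trans (measureReal_lexCdf_le μ hna ht)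
    intro z hz
    exact (show lexCdf μ z < t from hz).le
  · have h := measureReal_le_lexCdf μ hna ht'
    have h' : {z | lexCdf μ z < t} = {z | t ≤ lexCdf μ z}ᶜ := by ext; simp
    rw [h', probReal_compl_eq_one_sub
      (isClosed_le continuous_const (continuous_lexCdf μ hna)).measurableSet]
    linarith

/-- The distribution function pushes an atomless measure to the uniform one. -/
lemma measureReal_lexCdf_Icc (hna : ∀ z, μ {z} = 0) {c d : ℝ} (hc : 0 ≤ c) (hcd : c ≤ d)
    (hd : d ≤ 1) : μ.real (lexCdf μ ⁻¹' Set.Icc c d) = d - c := by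
  have hcont := continuous_lexCdf μ hna
  have h : lexCdf μ ⁻¹' Set.Icc c d = {z | lexCdf μ z ≤ d} \ {z | lexCdf μ z < c} := by
    ext z
    simp [and_comm]
  have hsub : {z | lexCdf μ z < c} ⊆ {z | lexCdf μ z ≤ d} := by
    intro z hz
    exact hz.le.trans hcd
  rw [h, measureReal_sdiff hsub (isOpen_lt hcont continuous_const).measurableSet,
    measureReal_lexCdf_lt μ hna hc (hcd.trans hd)]
  congr 1
  apply le_antisymm (measureReal_lexCdf_le μ hna (hc.trans hcd))
  calc d = μ.real {z | lexCdf μ z < d} := (measureReal_lexCdf_lt μ hna (hc.trans hcd) hd).symm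
    _ ≤ _ := by
        refine measureReal_mono ?_
        intro z hz
        exact (show lexCdf μ z < d from hz).le

lemma measure_frontier_lexCdf_Icc (hna : ∀ z, μ {z} = 0) {c d : ℝ} (hc : 0 ≤ c) (hcd : c ≤ d)
    (hd : d ≤ 1) : μ (frontier (lexCdf μ ⁻¹' Set.Icc c d)) = 0 := by
  have hpt : ∀ t : ℝ, 0 ≤ t → t ≤ 1 → μ (lexCdf μ ⁻¹' {t}) = 0 := by
    intro t ht ht'
    have h := measureReal_lexCdf_Icc μ hna ht le_rfl ht'
    rw [Set.Icc_self, sub_self] at h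
    exact (measureReal_eq_zero_iff).1 h
  refine measure_mono_null ((continuous_lexCdf μ hna).frontier_preimage_subset _) ?_
  rw [frontier_Icc hcd, Set.insert_eq, Set.preimage_union]
  exact measure_union_null (hpt c hc (hcd.trans hd)) (hpt d (hc.trans hcd) hd)

end Cdf

/-! ### Absence of atoms and injectivity along the orbit -/

section Invariant

variable {A : Type*} [MeasurableSpace A]

lemma measure_shift_iterate_preimage [TopologicalSpace A] [DiscreteTopology A] [Finite A]
    [BorelSpace A] {μ : Measure (ℕ → A)}
    (hinv : ∀ s : Set (ℕ → A), MeasurableSet s → μ (shift ⁻¹' s) = μ s) (p : ℕ)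
    {s : Set (ℕ → A)} (hs : MeasurableSet s) : μ (shift^[p] ⁻¹' s) = μ s := by
  induction p generalizing s with
  | zero => rfl
  | succ p ih =>
    rw [Function.iterate_succ, Set.preimage_comp,
      hinv _ ((continuous_shift.iterate p).measurable hs), ih hs]

lemma measure_prefixCyl_pos {μ : Measure (ℕ → A)} {w : ℕ → A}
    (hpos : ∀ u : List A, IsFactor u w → 0 < μ {z | InOrbitClosure z w ∧ occursAt u z 0})
    (i n : ℕ) : 0 < μ (prefixCyl (shift^[i] w) n) := by
  have hlen : (seg w i n).length = n := by simp [seg]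
  refine (hpos (seg w i n) ⟨i, by rw [occursAt, hlen]⟩).trans_le (measure_mono ?_)
  rintro z ⟨-, hz⟩ k hk
  rw [occursAt, hlen, seg_eq_seg_iff] at hz
  rw [shift_iterate_apply, hz k hk, zero_add]

variable [Fintype A] [TopologicalSpace A] [DiscreteTopology A] [BorelSpace A]

/-- Masses of points do not decrease along orbits, so an atom would be eventually periodic; the
uniform measure on its cycle would then be `μ`, and the positivity of all cylinders along `w`
would force `w` itself into that cycle. -/
lemma measure_singleton_eq_zero (w : ℕ → A) (hap : ¬ UltimatelyPeriodic w)
    (μ : Measure (ℕ → A)) [IsProbabilityMeasure μ]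
    (hsupp : μ {z | InOrbitClosure z w} = 1)
    (hinv : ∀ s : Set (ℕ → A), MeasurableSet s → μ (shift ⁻¹' s) = μ s)
    (huniq : ∀ μ' : Measure (ℕ → A), IsProbabilityMeasure μ' →
        μ' {z | InOrbitClosure z w} = 1 →
        (∀ s : Set (ℕ → A), MeasurableSet s → μ' (shift ⁻¹' s) = μ' s) → μ' = μ)
    (hcyl : ∀ i n, 0 < μ (prefixCyl (shift^[i] w) n)) (z : ℕ → A) : μ {z} = 0 := by
  by_contra hz
  have hLmeas := (isClosed_orbitClosure w).measurableSet
  have hmass : ∀ n, μ {z} ≤ μ {shift^[n] z} := by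
    intro n
    rw [← measure_shift_iterate_preimage hinv n (measurableSet_singleton (shift^[n] z))]
    exact measure_mono (by rintro _ rfl; rfl)
  have hninj : ¬ Function.Injective fun n => shift^[n] z := by
    intro hinj
    have hfin := Measure.finite_const_le_meas_of_disjoint_iUnion μ (pos_iff_ne_zero.2 hz)
      (As := fun n : ℕ => {shift^[n] z}) (fun n => measurableSet_singleton _)
      (fun n m hnm => Set.disjoint_singleton.2 fun h => hnm (hinj h)) (measure_ne_top _ _)
    rw [Set.eq_univ_of_forall (s := {n | μ {z} ≤ μ {shift^[n] z}}) hmass] at hfin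
    exact Set.infinite_univ hfin
  obtain ⟨i, q, hiq⟩ : ∃ i q, shift^[i] z = shift^[q + 1 + i] z := by
    by_contra! h
    refine hninj (Function.Injective.of_lt_imp_ne fun i j hij => ?_)
    have := h i (j - i - 1)
    rwa [show j - i - 1 + 1 + i = j by omega] at this
  set x := shift^[i] z with hx
  have hper : shift^[q + 1] x = x := by
    rw [hx, ← Function.iterate_add_apply, ← hiq]
  have hxL : InOrbitClosure x w := by
    by_contra hxL
    have h0 : μ {z | InOrbitClosure z w}ᶜ = 0 := (prob_compl_eq_zero_iff hLmeas).2 hsupp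
    have h1 : μ {x} = 0 := measure_mono_null (by simpa using hxL) h0
    exact hz (le_antisymm ((hmass i).trans h1.le) zero_le)
  have hμ : empirical shift x q = μ := huniq _ inferInstance
    (empirical_eq_one _ _ _ hLmeas fun n => hxL.shift_iterate n)
    (fun s hs => empirical_preimage_of_periodic _ continuous_shift.measurable x q hper hs)
  have hpref : ∀ n, ∃ j ∈ Finset.range (q + 1), shift^[j] x ∈ prefixCyl w n := by
    intro n
    have h := hcyl 0 n
    rw [← hμ, empirical_apply _ _ _ (isClopen_prefixCyl _ n).isOpen.measurableSet] at h
    by_contra! hn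
    refine h.ne' ?_
    rw [Finset.sum_eq_zero, mul_zero]
    intro j hj
    exact Set.indicator_of_notMem (hn j hj) _
  -- finitely many points cannot each leave the shrinking cylinders of `w`
  obtain ⟨j, hj⟩ : ∃ j, shift^[j] x = w := by
    by_contra! hne
    choose k hk using fun j => Function.ne_iff.1 (hne j)
    obtain ⟨j, hj, hjw⟩ := hpref ((Finset.range (q + 1)).sup k + 1)
    exact hk j (hjw (k j) (Nat.lt_succ_of_le (Finset.le_sup hj)))
  refine hap ⟨q + 1, q.succ_pos, 0, fun n _ => ?_⟩
  have h : shift^[q + 1] w = w := by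
    rw [← hj, ← Function.iterate_add_apply, add_comm, Function.iterate_add_apply, hper]
  calc w (n + (q + 1)) = shift^[q + 1] w n := by rw [shift_iterate_apply, add_comm]
    _ = w n := by rw [h]

variable [LinearOrder A]

lemma measure_lexIoc_eq_zero {μ : Measure (ℕ → A)} [IsProbabilityMeasure μ] {x y : ℕ → A}
    (hxy : lexLt x y) (h : lexCdf μ x = lexCdf μ y) :
    μ {z | lexLt x z ∧ lexLe z y} = 0 := by
  have hI : {z | lexLt x z ∧ lexLe z y} = {z | lexLe z y} \ {z | lexLe z x} := by
    ext z
    simp [← not_lexLe, and_comm]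
  have hsub : {z | lexLe z x} ⊆ {z | lexLe z y} := by
    intro z hz
    exact lexLe.trans hz (Or.inl hxy)
  rw [← measureReal_eq_zero_iff, hI, measureReal_sdiff hsub (isClosed_lexLe_left x).measurableSet]
  exact sub_eq_zero.2 h.symm

/-- Two words `x < y`, one a shift of the other by `p`, have different values of `ν`. Otherwise
the interval `(x, y]` and its preimage under `shift^[p]` are null; but a word of the long
cylinder of the earlier word `v` (one of `x`, `y`) that is on the inner side of `v` lies in
the interval, and one on the outer side is shifted by `p` into it. Hence the cylinder would be
null up to the single point `v`. -/
lemma lexCdf_ne_of_lexLt {μ : Measure (ℕ → A)} [IsProbabilityMeasure μ]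
    (hna : ∀ z, μ {z} = 0)
    (hinv : ∀ s : Set (ℕ → A), MeasurableSet s → μ (shift ⁻¹' s) = μ s)
    {x y v : ℕ → A} (hxy : lexLt x y) (p : ℕ)
    (hv : (v = x ∧ y = shift^[p] x) ∨ (v = y ∧ x = shift^[p] y))
    (hpos : ∀ n, 0 < μ (prefixCyl v n)) : lexCdf μ x ≠ lexCdf μ y := by
  intro h
  set I := {z | lexLt x z ∧ lexLe z y} with hIdef
  have hI : μ I = 0 := measure_lexIoc_eq_zero hxy h
  have hImeas : MeasurableSet I :=
    (isOpen_lexLt_right x).measurableSet.inter (isClosed_lexLe_left y).measurableSet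
  have hI' : μ (shift^[p] ⁻¹' I) = 0 := by
    rw [measure_shift_iterate_preimage hinv p hImeas, hI]
  obtain ⟨n, hn, hn'⟩ := hxy
  refine (hpos (p + (n + 1))).ne' (measure_mono_null (t := {v} ∪ (I ∪ shift^[p] ⁻¹' I)) ?_
    (measure_union_null (hna v) (measure_union_null hI hI')))
  intro z hz
  have hz1 : z ∈ prefixCyl v (n + 1) := fun k hk => hz k (by omega)
  have hz2 : shift^[p] z ∈ prefixCyl (shift^[p] v) (n + 1) := by
    intro k hk
    rw [shift_iterate_apply, shift_iterate_apply, hz _ (by omega)]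
  have hz3 : ∀ k < p, z k = v k := fun k hk => hz k (by omega)
  rcases lexLt_trichotomy z v with hzv | hzv | hzv
  · right
    have hs := hzv.shift_iterate hz3
    rcases hv with ⟨rfl, rfl⟩ | ⟨rfl, rfl⟩
    · exact Or.inr ⟨lexLt_of_mem_prefixCyl_right hn hn' n.lt_succ_self hz2, Or.inl hs⟩
    · exact Or.inl ⟨lexLt_of_mem_prefixCyl_right hn hn' n.lt_succ_self hz1, Or.inl hzv⟩
  · exact Or.inl hzv
  · right
    have hs := hzv.shift_iterate fun k hk => (hz3 k hk).symm
    rcases hv with ⟨rfl, rfl⟩ | ⟨rfl, rfl⟩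
    · exact Or.inl ⟨hzv, Or.inl (lexLt_of_mem_prefixCyl_left hn hn' n.lt_succ_self hz1)⟩
    · exact Or.inr ⟨hs, Or.inl (lexLt_of_mem_prefixCyl_left hn hn' n.lt_succ_self hz2)⟩

end Invariant

/-- Let `w` be an aperiodic word over a finite ordered alphabet whose
orbit closure `L_w` carries exactly one shift-invariant Borel probability measure `μ`
(formalized as a probability measure on `A^ℕ` giving full mass to `L_w`), and suppose
`μ` gives positive mass to the cylinder of every factor of `w`.  With
`ν(z) = μ{y ∈ L_w : y ≤ z}`, the sequence `(ν(σⁿ(w)))ₙ` is equidistributed on `[0,1]`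
and `ν(σⁿ(w)) ≠ ν(σᵐ(w))` for `n ≠ m`. -/
theorem nu_equidistributed {A : Type*} [Fintype A] [LinearOrder A]
    [MeasurableSpace A] [DiscreteMeasurableSpace A]
    (w : ℕ → A) (hap : ¬ UltimatelyPeriodic w)
    (μ : Measure (ℕ → A)) (hprob : IsProbabilityMeasure μ)
    (hsupp : μ {z | InOrbitClosure z w} = 1)
    (hinv : ∀ s : Set (ℕ → A), MeasurableSet s → μ (shift ⁻¹' s) = μ s)
    (huniq : ∀ μ' : Measure (ℕ → A), IsProbabilityMeasure μ' →
        μ' {z | InOrbitClosure z w} = 1 →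
        (∀ s : Set (ℕ → A), MeasurableSet s → μ' (shift ⁻¹' s) = μ' s) → μ' = μ)
    (hpos : ∀ u : List A, IsFactor u w →
        0 < μ {z | InOrbitClosure z w ∧ occursAt u z 0})
    (ν : (ℕ → A) → ℝ)
    (hν : ∀ z, ν z = (μ {y | InOrbitClosure y w ∧ lexLe y z}).toReal) :
    Equidistributed (fun n => ν (shift^[n] w)) ∧
    ∀ n m : ℕ, n ≠ m → ν (shift^[n] w) ≠ ν (shift^[m] w) := by
  let _ : TopologicalSpace A := ⊥
  have _ : DiscreteTopology A := ⟨rfl⟩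
  have _ : BorelSpace A := inferInstance
  have hLcl := isClosed_orbitClosure w
  have hcyl := measure_prefixCyl_pos hpos
  have hna := measure_singleton_eq_zero w hap μ hsupp hinv huniq hcyl
  -- restricting to the orbit closure, of full measure, is immaterial
  have hν' : ν = lexCdf μ := by
    funext z
    rw [hν, lexCdf, Measure.real, Set.ofPred_and, Set.inter_comm]
    congr 1
    exact measure_inter_conull ((prob_compl_eq_zero_iff hLcl.measurableSet).2 hsupp)
  subst hν'
  constructor
  · intro c d hc hcd hd
    have hconv := tendsto_empirical shift continuous_shift w _ hLcl
      (fun n => (inOrbitClosure_self w).shift_iterate n) ⟨μ, hprob⟩ huniq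
    have h := ProbabilityMeasure.tendsto_measure_of_null_frontier_of_tendsto' hconv
      (measure_frontier_lexCdf_Icc μ hna hc hcd hd)
    have h' := (ENNReal.tendsto_toReal (measure_ne_top μ _)).comp h
    have hmeas : MeasurableSet (lexCdf μ ⁻¹' Set.Icc c d) :=
      (continuous_lexCdf μ hna).measurable measurableSet_Icc
    rw [← measureReal_lexCdf_Icc μ hna hc hcd hd, ← tendsto_add_atTop_iff_nat 1]
    refine h'.congr fun N => ?_
    classical
    simp only [Function.comp_apply, empiricalProb, ProbabilityMeasure.coe_mk]
    rw [empirical_real_apply _ _ _ hmeas]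
    simp only [Set.mem_preimage, Set.mem_Icc]
  · suffices hinj : Function.Injective fun n => lexCdf μ (shift^[n] w) from
      fun n m hnm => hinj.ne hnm
    refine Function.Injective.of_lt_imp_ne fun n m hnm => ?_
    have hshift : shift^[m] w = shift^[m - n] (shift^[n] w) := by
      rw [← Function.iterate_add_apply, Nat.sub_add_cancel hnm.le]
    rcases lexLt_trichotomy (shift^[n] w) (shift^[m] w) with h | h | h
    · exact lexCdf_ne_of_lexLt hna hinv h (m - n) (Or.inl ⟨rfl, hshift⟩) (hcyl n)
    · exact absurd (shift_iterate_injective hap h) hnm.ne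
    · exact (lexCdf_ne_of_lexLt hna hinv h (m - n) (Or.inr ⟨rfl, hshift⟩) (hcyl n)).symm
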